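/- arXiv:2206.07017 — 3 statements merged into one kernel-verified Lean document; each statement's English description precedes it below -/
import Mathlib

section
/- Let α be a countable ordinal. If the group of homeomorphisms of [1, ω^α] (with the order topology) has no proper normal subgroup of index strictly less than 2^ℵ₀, then the group of homeomorphisms of [1, ω^(α+1)] (with the order topology) also has no proper normal subgroup of index strictly less than 2^ℵ₀. -/
open Ordinal Topology

noncomputable section

/-- The ordinal interval `[1, γ]`, i.e. the set of ordinals `β` with `1 ≤ β ≤ γ`, with the
subspace topology induced from the order topology on `Ordinal` (equivalently, its order
topology, since it is order-connected). -/
abbrev OrdIcc (γ : Ordinal) : Type _ := ↥(Set.Icc (1 : Ordinal) γ)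

/-- The group of self-homeomorphisms of a topological space, under composition. -/
instance homeoGroup {Y : Type*} [TopologicalSpace Y] : Group (Y ≃ₜ Y) where
  mul f g := g.trans f
  one := Homeomorph.refl Y
  inv := Homeomorph.symm
  mul_assoc f g h := rfl
  one_mul f := Homeomorph.ext fun _ => rfl
  mul_one f := Homeomorph.ext fun _ => rfl
  inv_mul_cancel f := Homeomorph.ext fun x => f.symm_apply_apply x

/-!
A normal subgroup `N` of small index in the homeomorphism group of `ℕ × ℤ × Y` contains a family
`(cₙ)` of homeomorphisms of `ℤ × Y` with some `cₙ` equal to the shift of `ℤ`: there are `2 ^ ℵ₀`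
families taking only the values `1` and the shift, so two of them lie in the same coset.
Commutators with this family put in `N` every commutator with the shift on the `n`-th copy of
`ℤ × Y`, hence every homeomorphism supported on a single column `{n} × {0} × Y`.

For `Y = ℕ × K` this column consists of infinitely many copies of `K`, so after conjugation `N`
contains every homeomorphism of a countable disjoint union of copies of `K` that fixes infinitely
many of them pointwise. When `K` is compact, every homeomorphism is a product of two such, and
`N` is everything. Finally `[1, ω ^ (α + 1)]` is the one-point compactification of `ℕ × [1, ω ^ α]`,
and all its homeomorphisms fix the top point, the only one of maximal Cantor–Bendixson rank.
-/

open Set Function Cardinal OnePoint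
open scoped commutatorElement

section SmallIndex

universe u v

variable {G : Type u} {H : Type v} [Group G] [Group H]

theorem mk_quotient_comap_lt_continuum (φ : G →* H) {N : Subgroup H} (hN : #(H ⧸ N) < 𝔠) :
    #(G ⧸ N.comap φ) < 𝔠 := by
  let ψ : G ⧸ N.comap φ → H ⧸ N := Quotient.map' φ fun a b h => by
    simpa only [QuotientGroup.leftRel_apply, Subgroup.mem_comap, map_mul, map_inv] using h
  have hψ : Injective ψ := by
    rintro ⟨a⟩ ⟨b⟩ h
    refine QuotientGroup.eq.2 ?_
    simpa only [Subgroup.mem_comap, map_mul, map_inv] using QuotientGroup.eq.1 h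
  exact lift_lt_continuum.1 ((lift_mk_le_lift_mk_of_injective hψ).trans_lt
    (lift_lt_continuum.2 hN))

variable (G) in
/-- The group `G` has no proper normal subgroup of index less than the continuum `𝔠 = 2 ^ ℵ₀`. -/
def NoSmallIndexNormalSubgroup : Prop :=
  ∀ N : Subgroup G, N.Normal → #(G ⧸ N) < 𝔠 → N = ⊤

theorem NoSmallIndexNormalSubgroup.of_surjective (hG : NoSmallIndexNormalSubgroup G) (φ : G →* H)
    (hφ : Surjective φ) : NoSmallIndexNormalSubgroup H := fun N hNormal hN => by
  have hcomap : N.comap φ = ⊤ := hG _ (hNormal.comap φ) (mk_quotient_comap_lt_continuum φ hN)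
  rw [← Subgroup.map_comap_eq_self_of_surjective hφ N, hcomap, Subgroup.map_top_of_surjective φ hφ]

variable {ι : Type u} {M : Type v} [Group M]

theorem exists_mem_apply_eq_of_mk_quotient_lt {N : Subgroup (ι → M)}
    (hN : #((ι → M) ⧸ N) < 2 ^ Cardinal.lift.{v} #ι) (g : M) : ∃ c ∈ N, ∃ i, c i = g := by
  classical
  let ind (s : Set ι) : ι → M := s.mulIndicator fun _ => g
  have hnot : ¬ Injective fun s : Set ι => (ind s : (ι → M) ⧸ N) := fun hinj => by
    have hle := lift_mk_le_lift_mk_of_injective hinj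
    rw [mk_set, lift_two_power, Cardinal.lift_umax.{u, v}, Cardinal.lift_id'.{u, v}] at hle
    exact hle.not_gt hN
  obtain ⟨s, t, hst, hne⟩ := not_injective_iff.1 hnot
  wlog hts : ¬ t ⊆ s generalizing s t
  · exact this t s hst.symm hne.symm fun h => hne (h.antisymm (not_not.1 hts))
  obtain ⟨i, hit, his⟩ := not_subset.1 hts
  refine ⟨(ind s)⁻¹ * ind t, QuotientGroup.eq.1 hst, i, ?_⟩
  simp [ind, hit, his]

theorem exists_forall_mulSingle_commutator_mem [DecidableEq ι] {N : Subgroup (ι → M)}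
    (hNormal : N.Normal) (hN : #((ι → M) ⧸ N) < 2 ^ Cardinal.lift.{v} #ι) (g : M) :
    ∃ i, ∀ p : M, Pi.mulSingle i ⁅p, g⁆ ∈ N := by
  obtain ⟨c, hc, i, rfl⟩ := exists_mem_apply_eq_of_mk_quotient_lt hN g
  refine ⟨i, fun p => ?_⟩
  have hcomm : Pi.mulSingle i ⁅p, c i⁆ = ⁅(Pi.mulSingle i p : ι → M), c⁆ := by
    ext j
    rcases eq_or_ne j i with rfl | hj
    · simp [commutatorElement_def]
    · simp [commutatorElement_def, hj]
  rw [hcomm, commutatorElement_def]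
  exact N.mul_mem (hNormal.conj_mem c hc _) (N.inv_mem hc)

end SmallIndex

section Homeomorphisms

variable {X Y : Type*} [TopologicalSpace X] [TopologicalSpace Y]

/-- Conjugation by a homeomorphism, as an isomorphism of homeomorphism groups. -/
def homeoConj (e : X ≃ₜ Y) : (X ≃ₜ X) ≃* (Y ≃ₜ Y) where
  toFun f := e.symm.trans (f.trans e)
  invFun f := e.trans (f.trans e.symm)
  left_inv f := by ext; simp
  right_inv f := by ext; simp
  map_mul' f g := by ext; simp

theorem exists_homeomorph_restrict {u : X → Y} (hu : IsEmbedding u) (h : Y ≃ₜ Y)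
    (hrange : ∀ y, y ∈ range u ↔ h y ∈ range u) : ∃ f : X ≃ₜ X, ∀ x, u (f x) = h (u x) := by
  let e : X ≃ₜ range u := hu.toHomeomorph
  refine ⟨e.trans ((h.subtype hrange).trans e.symm), fun x => ?_⟩
  exact congrArg Subtype.val (e.apply_symm_apply _)

theorem continuous_extend_of_isClopen_range {Z : Type*} [TopologicalSpace Z] {u : X → Y}
    (hu : IsOpenEmbedding u) (hclosed : IsClosed (range u)) {g : X → Z} (hg : Continuous g)
    {k : Y → Z} (hk : Continuous k) : Continuous (extend u g k) := by
  refine continuous_iff_continuousAt.2 fun y => ?_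
  by_cases hy : y ∈ range u
  · obtain ⟨x, rfl⟩ := hy
    rw [← hu.continuousAt_iff, extend_comp hu.injective]
    exact hg.continuousAt
  · refine hk.continuousAt.congr ?_
    filter_upwards [hclosed.isOpen_compl.mem_nhds hy] with z hz
    exact (extend_apply' g k z hz).symm

theorem exists_homeomorph_swap {u v : X → Y} (hu : IsOpenEmbedding u) (hv : IsOpenEmbedding v)
    (hu' : IsClosed (range u)) (hv' : IsClosed (range v)) (hdisj : Disjoint (range u) (range v)) :
    ∃ s : Y ≃ₜ Y, (∀ x, s (u x) = v x) ∧ ∀ y, y ∉ range u → y ∉ range v → s y = y := by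
  let σ : Y → Y := extend u v (extend v u id)
  have hσu (x : X) : σ (u x) = v x := hu.injective.extend_apply ..
  have hσv (x : X) : σ (v x) = u x := by
    rw [show σ (v x) = extend v u id (v x) from
      extend_apply' _ _ _ (disjoint_right.1 hdisj (mem_range_self x)), hv.injective.extend_apply]
  have hσ (y : Y) (hyu : y ∉ range u) (hyv : y ∉ range v) : σ y = y :=
    (extend_apply' _ _ _ hyu).trans (extend_apply' _ _ _ hyv)
  have hinv : Involutive σ := fun y => by
    by_cases hyu : y ∈ range u
    · obtain ⟨x, rfl⟩ := hyu
      rw [hσu, hσv]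
    by_cases hyv : y ∈ range v
    · obtain ⟨x, rfl⟩ := hyv
      rw [hσv, hσu]
    · rw [hσ y hyu hyv, hσ y hyu hyv]
  have hcont : Continuous σ := continuous_extend_of_isClopen_range hu hu' hv.continuous
    (continuous_extend_of_isClopen_range hv hv' hu.continuous continuous_id)
  exact ⟨⟨hinv.toPerm, hcont, hcont⟩, hσu, hσ⟩

/-- Moving `u` to `w` through the auxiliary `v` allows the ranges of `u` and `w` to overlap. -/
theorem exists_homeomorph_apply_eq_of_disjoint_range {u v w : X → Y} (hu : IsOpenEmbedding u)
    (hv : IsOpenEmbedding v) (hw : IsOpenEmbedding w) (hu' : IsClosed (range u))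
    (hv' : IsClosed (range v)) (hw' : IsClosed (range w)) (huv : Disjoint (range u) (range v))
    (hvw : Disjoint (range v) (range w)) :
    ∃ s : Y ≃ₜ Y, (∀ x, s (u x) = w x) ∧
      ∀ y, y ∉ range u → y ∉ range v → y ∉ range w → s y = y := by
  obtain ⟨σ, hσ, hσfix⟩ := exists_homeomorph_swap hu hv hu' hv' huv
  obtain ⟨τ, hτ, hτfix⟩ := exists_homeomorph_swap hv hw hv' hw' hvw
  refine ⟨σ.trans τ, fun x => ?_, fun y hyu hyv hyw => ?_⟩
  · rw [Homeomorph.trans_apply, hσ, hτ]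
  · rw [Homeomorph.trans_apply, hσfix y hyu hyv, hτfix y hyv hyw]

end Homeomorphisms

section Columns

variable {ι Y : Type*} [TopologicalSpace Y]

section Fiberwise

variable [TopologicalSpace ι] [DiscreteTopology ι]

/-- A family of homeomorphisms of `Y` indexed by `ι` acts on `ι × Y`, its `i`-th member acting on
the column `{i} × Y`. -/
def fiberwise : (ι → (Y ≃ₜ Y)) →* (ι × Y ≃ₜ ι × Y) where
  toFun φ :=
    { toEquiv := Equiv.prodCongrRight fun i => (φ i).toEquiv
      continuous_toFun := continuous_prod_of_discrete_left.2 fun i =>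
        (Continuous.prodMk_right i).comp (φ i).continuous
      continuous_invFun := continuous_prod_of_discrete_left.2 fun i =>
        (Continuous.prodMk_right i).comp (φ i).symm.continuous }
  map_one' := rfl
  map_mul' _ _ := rfl

@[simp]
theorem fiberwise_apply (φ : ι → (Y ≃ₜ Y)) (p : ι × Y) : fiberwise φ p = (p.1, φ p.1 p.2) := rfl

/-- A permutation of the discrete space `ι` acts on `ι × Y` by permuting the columns. -/
def permColumns (π : Equiv.Perm ι) : ι × Y ≃ₜ ι × Y :=
  π.toHomeomorphOfDiscrete.prodCongr (Homeomorph.refl Y)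

@[simp]
theorem permColumns_apply (π : Equiv.Perm ι) (p : ι × Y) :
    permColumns π p = (π p.1, p.2) := rfl

/-- The infinite product `⋯ F, F, F, 1, 1, ⋯` telescopes against its own shift. -/
theorem exists_fiberwise_mulSingle_eq_commutator (F : Y ≃ₜ Y) :
    ∃ p : ℤ × Y ≃ₜ ℤ × Y,
      fiberwise (Pi.mulSingle 0 F) = ⁅p, permColumns (Equiv.addRight (1 : ℤ))⁆ := by
  refine ⟨fiberwise fun k => if 0 ≤ k then F else 1, ?_⟩
  rw [commutatorElement_def, eq_mul_inv_iff_mul_eq, eq_mul_inv_iff_mul_eq]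
  ext ⟨k, y⟩ : 1
  rcases lt_trichotomy k (-1) with hk | rfl | hk
  · simp [show ¬ 0 ≤ k by lia, show ¬ 0 ≤ k + 1 by lia,
      show k + 1 ≠ 0 by lia]
  · simp
  · simp [show 0 ≤ k by lia, show 0 ≤ k + 1 by lia, show k + 1 ≠ 0 by lia]

theorem exists_forall_fiberwise_fiberwise_mem {N : Subgroup (ℕ × ℤ × Y ≃ₜ ℕ × ℤ × Y)}
    (hNormal : N.Normal) (hN : #((ℕ × ℤ × Y ≃ₜ ℕ × ℤ × Y) ⧸ N) < 𝔠) :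
    ∃ n, ∀ F : Y ≃ₜ Y, fiberwise (Pi.mulSingle n (fiberwise (Pi.mulSingle 0 F))) ∈ N := by
  obtain ⟨n, hn⟩ := exists_forall_mulSingle_commutator_mem (hNormal.comap fiberwise)
    (by simpa using mk_quotient_comap_lt_continuum fiberwise hN)
    (permColumns (Equiv.addRight (1 : ℤ)))
  refine ⟨n, fun F => ?_⟩
  obtain ⟨p, hp⟩ := exists_fiberwise_mulSingle_eq_commutator F
  rw [hp]
  exact hn p

end Fiberwise

section FixedColumns

variable [TopologicalSpace ι]

/-- The indices `i` such that `f` is the identity on the column `{i} × Y`. -/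
def fixedColumns (f : ι × Y ≃ₜ ι × Y) : Set ι :=
  {i | ∀ y, f (i, y) = (i, y)}

variable {κ : Type*} [TopologicalSpace κ] [DiscreteTopology ι] [DecidableEq ι]

theorem exists_eq_fiberwise_mulSingle {f : ι × Y ≃ₜ ι × Y} {i : ι} (hf : {i}ᶜ ⊆ fixedColumns f) :
    ∃ F : Y ≃ₜ Y, f = fiberwise (Pi.mulSingle i F) := by
  have hfix (p : ι × Y) (hp : p.1 ≠ i) : f p = p := hf hp p.2
  have hrange (p : ι × Y) : p ∈ range (Prod.mk i) ↔ f p ∈ range (Prod.mk i : Y → ι × Y) := by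
    have hmem (q : ι × Y) : q ∈ range (Prod.mk i : Y → ι × Y) ↔ q.1 = i := by
      simp [Prod.ext_iff, eq_comm]
    rw [hmem, hmem]
    constructor <;> intro h <;> by_contra hne
    · exact hne (by rwa [f.injective (hfix _ hne)])
    · exact hne (by rwa [hfix _ hne] at h)
  obtain ⟨F, hF⟩ := exists_homeomorph_restrict (isEmbedding_prodMkRight i) f hrange
  refine ⟨F, ?_⟩
  ext ⟨j, y⟩ : 1
  rcases eq_or_ne j i with rfl | hj
  · simp [hF]
  · simp [hfix (j, y) hj, hj]

theorem exists_eq_fiberwise_fiberwise_mulSingle [DiscreteTopology κ] [DecidableEq κ]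
    {f : ι × κ × Y ≃ₜ ι × κ × Y} {i : ι} {k : κ}
    (hf : ∀ p : ι × κ × Y, ¬ (p.1 = i ∧ p.2.1 = k) → f p = p) :
    ∃ F : Y ≃ₜ Y, f = fiberwise (Pi.mulSingle i (fiberwise (Pi.mulSingle k F))) := by
  obtain ⟨F, rfl⟩ := exists_eq_fiberwise_mulSingle (f := f) (i := i)
    fun j hj q => hf (j, q) fun h => hj h.1
  obtain ⟨F', rfl⟩ := exists_eq_fiberwise_mulSingle (f := F) (i := k)
    fun l hl y => by simpa using hf (i, l, y) fun h => hl h.2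
  exact ⟨F', rfl⟩

end FixedColumns

end Columns

section HomeomorphProd

theorem exists_perm_compl_subset_image {T : Type*} [Countable T] {S Z : Set T} (hS : S.Infinite)
    (hS' : Sᶜ.Infinite) (hZ : Z.Infinite) : ∃ π : Equiv.Perm T, Sᶜ ⊆ π '' Z := by
  classical
  obtain ⟨A, B, rfl, hdisj, hcard⟩ := hZ.exists_union_disjoint_cardinal_eq_of_infinite
  obtain ⟨eAB⟩ := Cardinal.eq.1 hcard
  have hfin : ¬ A.Finite := fun hA => hZ (hA.union (eAB.set_finite_iff.1 hA))
  have hA : Infinite {t // t ∈ A} := Set.Infinite.to_subtype hfin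
  have hA' : Infinite {t // t ∉ A} := Set.Infinite.to_subtype
    (Set.Infinite.mono hdisj.subset_compl_left fun hB => hfin (eAB.set_finite_iff.2 hB))
  have hcompl : Infinite {t // t ∉ S} := hS'.to_subtype
  have hnot : Infinite {t // ¬ t ∉ S} := by simpa only [not_not] using hS.to_subtype
  obtain ⟨e⟩ : Nonempty ({t // t ∈ A} ≃ {t // t ∉ S}) := nonempty_equiv_of_countable
  obtain ⟨e'⟩ : Nonempty ({t // t ∉ A} ≃ {t // ¬ t ∉ S}) := nonempty_equiv_of_countable
  refine ⟨e.subtypeCongr e', fun t ht => ⟨e.symm ⟨t, ht⟩, .inl (e.symm ⟨t, ht⟩).2, ?_⟩⟩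
  simp [Equiv.subtypeCongr]

variable {T K : Type*} [TopologicalSpace T] [DiscreteTopology T] [TopologicalSpace K]

theorem exists_infinite_forall_compl_subset_fixedColumns_mem [Countable T] [Infinite T]
    {N : Subgroup (T × K ≃ₜ T × K)} (hNormal : N.Normal) (hN : #((T × K ≃ₜ T × K) ⧸ N) < 𝔠) :
    ∃ S : Set T, S.Infinite ∧ Sᶜ.Infinite ∧ ∀ f, Sᶜ ⊆ fixedColumns f → f ∈ N := by
  obtain ⟨e⟩ : Nonempty (T ≃ ℕ × ℤ × ℕ) := nonempty_equiv_of_countable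
  let E : T × K ≃ₜ ℕ × ℤ × ℕ × K :=
    (e.toHomeomorphOfDiscrete.prodCongr (.refl K)).trans <|
      (Homeomorph.prodAssoc ℕ (ℤ × ℕ) K).trans <|
        (Homeomorph.refl ℕ).prodCongr (Homeomorph.prodAssoc ℤ ℕ K)
  let φ := (homeoConj E.symm).toMonoidHom
  obtain ⟨n, hn⟩ := exists_forall_fiberwise_fiberwise_mem (hNormal.comap φ)
    (mk_quotient_comap_lt_continuum φ hN)
  have hinj (k : ℤ) : Injective fun j : ℕ => e.symm (n, k, j) := fun i j h => by simpa using h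
  refine ⟨{t | (e t).1 = n ∧ (e t).2.1 = 0}, ?_, ?_, fun f hf => ?_⟩
  · exact (infinite_range_of_injective (hinj 0)).mono (by rintro _ ⟨j, rfl⟩; simp)
  · exact (infinite_range_of_injective (hinj 1)).mono (by rintro _ ⟨j, rfl⟩; simp)
  · obtain ⟨F, hF⟩ := exists_eq_fiberwise_fiberwise_mulSingle (f := homeoConj E f) (i := n)
      (k := (0 : ℤ)) fun p hp => by
        obtain ⟨⟨t, x⟩, rfl⟩ := E.surjective p
        exact congrArg E ((congrArg f (E.symm_apply_apply _)).trans (hf hp x))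
    have hmem : φ (homeoConj E f) ∈ N := hF ▸ hn F
    exact (homeoConj E).symm_apply_apply f ▸ hmem

theorem mem_of_infinite_fixedColumns [Countable T] [Infinite T]
    {N : Subgroup (T × K ≃ₜ T × K)} (hNormal : N.Normal) (hN : #((T × K ≃ₜ T × K) ⧸ N) < 𝔠)
    {f : T × K ≃ₜ T × K} (hf : (fixedColumns f).Infinite) : f ∈ N := by
  obtain ⟨S, hS, hS', hSN⟩ := exists_infinite_forall_compl_subset_fixedColumns_mem hNormal hN
  obtain ⟨π, hπ⟩ := exists_perm_compl_subset_image hS hS' hf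
  have hconj : permColumns π * f * (permColumns π)⁻¹ ∈ N := hSN _ fun t ht x => by
    obtain ⟨z, hz, rfl⟩ := hπ ht
    have hinv : (permColumns π)⁻¹ (π z, x) = (z, x) :=
      (permColumns π).symm_apply_apply (z, x)
    simp [hinv, hz x]
  simpa using hNormal.mem_comm_iff.1 hconj

theorem exists_seq_pairwise_of_finite {α : Type*} [Infinite α] (r : α → α → Prop) [Std.Symm r]
    (h : ∀ a, {b | ¬ r a b}.Finite) : ∃ t : ℕ → α, Pairwise (r on t) := by
  obtain ⟨t, -, ht⟩ := exists_seq_of_forall_finset_exists' (fun _ => True) r fun F _ => by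
    obtain ⟨b, hb⟩ := (F.finite_toSet.biUnion fun a _ => h a).exists_notMem
    exact ⟨b, trivial, by simpa using hb⟩
  exact ⟨t, ht⟩

theorem isOpenEmbedding_prodMap_id {ι : Type*} [TopologicalSpace ι] [DiscreteTopology ι]
    {a : ι → T} (ha : Injective a) :
    IsOpenEmbedding (Prod.map a id : ι × K → T × K) :=
  (IsOpenEmbedding.of_continuous_injective_isOpenMap continuous_of_discreteTopology ha
    fun _ _ => isOpen_discrete _).prodMap .id

theorem isClosed_range_prodMap_id {ι : Type*} (a : ι → T) :
    IsClosed (range (Prod.map a id : ι × K → T × K)) := by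
  rw [range_prodMap]
  exact (isClosed_discrete _).prod (by simp)

variable [CompactSpace K] [Infinite T]

theorem exists_seq_disjoint_columns (f : T × K ≃ₜ T × K) :
    ∃ t : ℕ → T, Injective t ∧ ∀ i j, i ≠ j → ∀ x, (f (t i, x)).1 ≠ t j := by
  let r (a b : T) : Prop := a ≠ b ∧ (∀ x, (f (a, x)).1 ≠ b) ∧ ∀ x, (f (b, x)).1 ≠ a
  have hsymm : Std.Symm r := ⟨fun a b h => ⟨h.1.symm, h.2.2, h.2.1⟩⟩
  have hfinite (h : T × K ≃ₜ T × K) (a : T) : (range fun x => (h (a, x)).1).Finite :=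
    (isCompact_range (by fun_prop)).finite_of_discrete
  obtain ⟨t, ht⟩ := exists_seq_pairwise_of_finite r fun a => by
    refine (((finite_singleton a).union (hfinite f a)).union (hfinite f.symm a)).subset ?_
    intro b hb
    by_contra hnot
    simp only [mem_union, mem_singleton_iff, mem_range, not_or, not_exists] at hnot
    refine hb ⟨Ne.symm hnot.1.1, hnot.1.2, fun x hx => hnot.2 (f (b, x)).2 ?_⟩
    rw [← hx, f.symm_apply_apply]
  refine ⟨t, fun i j hij => ?_, fun i j hij => (ht hij).2.1⟩
  by_contra hne
  exact (ht hne).1 hij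

/-- If `A`, `B`, `C` are infinite disjoint families of columns with `f A` disjoint from `B` and
`C`, then `g` may be taken to agree with `f` on `A` and to be the identity on `C`. -/
theorem exists_infinite_fixedColumns_factorization (f : T × K ≃ₜ T × K) :
    ∃ g : T × K ≃ₜ T × K, (fixedColumns g).Infinite ∧ (fixedColumns (g⁻¹ * f)).Infinite := by
  obtain ⟨t, ht, hft⟩ := exists_seq_disjoint_columns f
  let col (r : ℕ) : ℕ × K → T × K := Prod.map (fun n => t (3 * n + r)) id
  have hinj (r : ℕ) : Injective fun n => t (3 * n + r) := fun m n h => by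
    have := ht h
    lia
  have hopen (r : ℕ) : IsOpenEmbedding (col r) := isOpenEmbedding_prodMap_id (hinj r)
  have hclosed (r : ℕ) : IsClosed (range (col r)) := isClosed_range_prodMap_id _
  have hfclosed : IsClosed (range (f ∘ col 0)) := by
    rw [range_comp]
    exact f.isClosedMap _ (hclosed 0)
  have hcol {r s : ℕ} (hr : r < 3) (hs : s < 3) (hrs : r ≠ s) :
      Disjoint (range (col r)) (range (col s)) := by
    rw [disjoint_left]
    rintro _ ⟨p, rfl⟩ ⟨q, hq⟩
    have := ht (congrArg Prod.fst hq)
    lia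
  have hfcol {s : ℕ} (hs : s < 3) (hs0 : s ≠ 0) :
      Disjoint (range (col s)) (range (f ∘ col 0)) := by
    rw [disjoint_left]
    rintro _ ⟨q, rfl⟩ ⟨p, hp⟩
    exact hft (3 * p.1 + 0) (3 * q.1 + s) (by lia) p.2 (congrArg Prod.fst hp)
  obtain ⟨g, hg, hgfix⟩ := exists_homeomorph_apply_eq_of_disjoint_range (hopen 0) (hopen 1)
    (f.isOpenEmbedding.comp (hopen 0)) (hclosed 0) (hclosed 1) hfclosed
    (hcol (by lia) (by lia) (by lia)) (hfcol (by lia) (by lia))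
  refine ⟨g, (infinite_range_of_injective (hinj 2)).mono ?_,
    (infinite_range_of_injective (hinj 0)).mono ?_⟩
  · rintro _ ⟨n, rfl⟩ x
    have hmem : (t (3 * n + 2), x) ∈ range (col 2) := ⟨(n, x), rfl⟩
    exact hgfix _ (disjoint_left.1 (hcol (by lia) (by lia) (by lia)) hmem)
      (disjoint_left.1 (hcol (by lia) (by lia) (by lia)) hmem)
      (disjoint_left.1 (hfcol (by lia) (by lia)) hmem)
  · rintro _ ⟨n, rfl⟩ x
    exact g.symm_apply_eq.2 (hg (n, x)).symm

theorem noSmallIndexNormalSubgroup_homeomorph_prod [Countable T] :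
    NoSmallIndexNormalSubgroup (T × K ≃ₜ T × K) := fun N hNormal hN => by
  refine eq_top_iff.2 fun f _ => ?_
  obtain ⟨g, hg, hgf⟩ := exists_infinite_fixedColumns_factorization f
  rw [← mul_inv_cancel_left g f]
  exact N.mul_mem (mem_of_infinite_fixedColumns hNormal hN hg)
    (mem_of_infinite_fixedColumns hNormal hN hgf)

end HomeomorphProd

section OnePoint

variable {X : Type*} [TopologicalSpace X]

/-- Extension to the one-point compactification, as a homomorphism of homeomorphism groups. -/
def onePointHomeo : (X ≃ₜ X) →* (OnePoint X ≃ₜ OnePoint X) where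
  toFun f := f.onePointCongr
  map_one' := by ext p; cases p <;> rfl
  map_mul' f g := by ext p; cases p <;> rfl

theorem exists_onePointHomeo_eq {h : OnePoint X ≃ₜ OnePoint X} (hinfty : h ∞ = ∞) :
    ∃ f : X ≃ₜ X, onePointHomeo f = h := by
  obtain ⟨f, hf⟩ := exists_homeomorph_restrict isOpenEmbedding_coe.isEmbedding h fun p => by
    rw [← not_iff_not, notMem_range_coe_iff, notMem_range_coe_iff]
    exact ⟨fun hp => hp ▸ hinfty, fun hp => h.injective (hp.trans hinfty.symm)⟩
  refine ⟨f, ?_⟩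
  ext p : 1
  cases p with
  | infty => exact hinfty.symm
  | coe x => exact hf x

theorem NoSmallIndexNormalSubgroup.homeomorph_onePoint
    (hX : NoSmallIndexNormalSubgroup (X ≃ₜ X))
    (hinfty : ∀ h : OnePoint X ≃ₜ OnePoint X, h ∞ = ∞) :
    NoSmallIndexNormalSubgroup (OnePoint X ≃ₜ OnePoint X) :=
  hX.of_surjective onePointHomeo fun h => exists_onePointHomeo_eq (hinfty h)

end OnePoint

section Ordinals

theorem isOpen_Ioc_ordinal (a b : Ordinal) : IsOpen (Ioc a b) := by
  rw [← Ioo_succ_right_eq_Ioc]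
  exact isOpen_Ioo

theorem exists_eq_add_omega0_opow {y : Ordinal} (hy : y ≠ 0) : ∃ w c : Ordinal, y = w + ω ^ c := by
  induction y using WellFoundedLT.induction with
  | ind y ih =>
    by_cases hprin : IsPrincipal (· + ·) y
    · obtain ⟨c, rfl⟩ := (isPrincipal_add_iff_zero_or_omega0_opow.1 hprin).resolve_left hy
      exact ⟨0, c, (zero_add _).symm⟩
    · obtain ⟨a, ha, b, hb, rfl⟩ := exists_lt_add_of_not_isPrincipal_add hprin
      have hb0 : b ≠ 0 := by
        rintro rfl
        simp at ha
      obtain ⟨w, c, rfl⟩ := ih b hb hb0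
      exact ⟨a + w, c, (add_assoc _ _ _).symm⟩

theorem exists_Ioc_subset_of_mem_nhdsWithin_add_omega0_opow {a c δ : Ordinal} {s : Set Ordinal}
    (hs : s ∈ 𝓝[Ioc a (a + ω ^ δ)] (a + ω ^ δ)) (hc : c < δ) :
    ∃ γ, a ≤ γ ∧ γ + ω ^ c < a + ω ^ δ ∧ Ioc γ (a + ω ^ δ) ⊆ s := by
  have hpos : 0 < ω ^ δ := opow_pos δ omega0_pos
  have hab : a < a + ω ^ δ := lt_add_of_pos_right a hpos
  rw [nhdsWithin_Ioc_eq_nhdsLE hab, mem_nhdsLE_iff_exists_mem_Ico_Ioc_subset hab] at hs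
  obtain ⟨γ, ⟨haγ, hγ⟩, hsub⟩ := hs
  obtain ⟨d, rfl⟩ := exists_add_of_le haγ
  refine ⟨a + d, haγ, ?_, hsub⟩
  rw [add_assoc]
  exact (add_lt_add_iff_left a).2 <| isPrincipal_add_omega0_opow δ (lt_of_add_lt_add_left hγ)
    ((opow_lt_opow_iff_right one_lt_omega0).2 hc)

/-- A continuous injection does not lower Cantor–Bendixson rank: if `g (a + ω ^ δ)` had a smaller
last Cantor normal form term `ω ^ c`, then by induction some `γ + ω ^ c < a + ω ^ δ` close to
`a + ω ^ δ` would have the same image. -/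
theorem add_omega0_opow_le_apply_of_injOn {g : Ordinal → Ordinal} {a w δ : Ordinal}
    (hcont : ContinuousOn g (Ioc a (a + ω ^ δ))) (hinj : InjOn g (Ioc a (a + ω ^ δ)))
    (hlt : ∀ x ∈ Ioc a (a + ω ^ δ), w < g x) : w + ω ^ δ ≤ g (a + ω ^ δ) := by
  induction δ using WellFoundedLT.induction generalizing a w with
  | ind δ ih =>
    by_contra! hgb
    have hpos (c : Ordinal) : 0 < ω ^ c := opow_pos c omega0_pos
    have htop : a + ω ^ δ ∈ Ioc a (a + ω ^ δ) := ⟨lt_add_of_pos_right a (hpos δ), le_rfl⟩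
    obtain ⟨v, hv⟩ := exists_add_of_le (hlt _ htop).le
    obtain ⟨w', c, rfl⟩ : ∃ w' c : Ordinal, v = w' + ω ^ c := exists_eq_add_omega0_opow <| by
      rintro rfl
      exact (hlt _ htop).ne' (by simpa using hv)
    rw [← add_assoc] at hv
    have hcδ : c < δ := by
      rw [hv, add_assoc] at hgb
      exact (opow_lt_opow_iff_right one_lt_omega0).1
        (le_add_self.trans_lt (lt_of_add_lt_add_left hgb))
    have hnhds : Ioc (w + w') (g (a + ω ^ δ)) ∈ 𝓝 (g (a + ω ^ δ)) :=
      (isOpen_Ioc_ordinal _ _).mem_nhds ⟨hv ▸ lt_add_of_pos_right _ (hpos c), le_rfl⟩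
    obtain ⟨γ, haγ, hγ, hsub⟩ :=
      exists_Ioc_subset_of_mem_nhdsWithin_add_omega0_opow (hcont _ htop hnhds) hcδ
    have hIoc : Ioc γ (γ + ω ^ c) ⊆ Ioc a (a + ω ^ δ) := Ioc_subset_Ioc haγ hγ.le
    have hmem : γ + ω ^ c ∈ Ioc γ (γ + ω ^ c) := ⟨lt_add_of_pos_right γ (hpos c), le_rfl⟩
    have hle : g (γ + ω ^ c) ≤ g (a + ω ^ δ) := (hsub ⟨hmem.1, hγ.le⟩).2
    have hge : w + w' + ω ^ c ≤ g (γ + ω ^ c) := ih c hcδ (hcont.mono hIoc) (hinj.mono hIoc)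
      fun x hx => (hsub ⟨hx.1, hx.2.trans hγ.le⟩).1
    exact hγ.ne (hinj (hIoc hmem) htop (hle.antisymm (hv ▸ hge)))

theorem homeomorph_ordIcc_apply_top {γ δ : Ordinal} (hγ : γ = ω ^ δ) (hone : 1 ≤ γ)
    (f : OrdIcc γ ≃ₜ OrdIcc γ) : f ⟨γ, hone, le_rfl⟩ = ⟨γ, hone, le_rfl⟩ := by
  let g : Ordinal → Ordinal := IccExtend hone fun x => (f x : Ordinal)
  have hgtop : g γ = f ⟨γ, hone, le_rfl⟩ := IccExtend_right hone _
  have hcont : Continuous g := (continuous_subtype_val.comp f.continuous).Icc_extend'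
  have hg {x : Ordinal} (hx : x ∈ Ioc 0 (0 + ω ^ δ)) :
      ∃ h : x ∈ Icc 1 γ, g x = f ⟨x, h⟩ := by
    rw [zero_add, ← hγ] at hx
    have hx' : x ∈ Icc 1 γ := ⟨Order.one_le_iff_pos.2 hx.1, hx.2⟩
    exact ⟨hx', IccExtend_of_mem _ _ hx'⟩
  have hle : 0 + ω ^ δ ≤ g (0 + ω ^ δ) := by
    refine add_omega0_opow_le_apply_of_injOn hcont.continuousOn ?_ ?_
    · intro x hx y hy hxy
      obtain ⟨hx', hgx⟩ := hg hx
      obtain ⟨hy', hgy⟩ := hg hy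
      rw [hgx, hgy] at hxy
      exact congrArg Subtype.val (f.injective (Subtype.ext hxy))
    · intro x hx
      obtain ⟨hx', hgx⟩ := hg hx
      exact hgx ▸ Order.one_le_iff_pos.1 (f _).2.1
  rw [zero_add, ← hγ, hgtop] at hle
  exact Subtype.ext (le_antisymm (f _).2.2 hle)

section Blocks

variable {γ : Ordinal}

theorem mul_natCast_add_le_mul_natCast {m n : ℕ} (hmn : m < n) (x : OrdIcc γ) :
    γ * m + x ≤ γ * n := by
  calc γ * m + x ≤ γ * m + γ := add_le_add_right x.2.2 _
    _ = γ * ((m + 1 : ℕ) : Ordinal) := by rw [Nat.cast_succ, mul_add_one]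
    _ ≤ γ * n := mul_le_mul_right (Nat.cast_le.2 hmn) γ

theorem mul_natCast_lt_mul_natCast_add (n : ℕ) (x : OrdIcc γ) : γ * n < γ * n + x :=
  lt_add_of_pos_right _ (Order.one_le_iff_pos.1 x.2.1)

theorem mul_natCast_add_lt_mul_omega0 (n : ℕ) (x : OrdIcc γ) : γ * n + x < γ * ω := by
  calc γ * n + x ≤ γ * ((n + 1 : ℕ) : Ordinal) := mul_natCast_add_le_mul_natCast n.lt_succ_self x
    _ < γ * ((n + 1 : ℕ) : Ordinal) + x := mul_natCast_lt_mul_natCast_add _ x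
    _ ≤ γ * ((n + 2 : ℕ) : Ordinal) := mul_natCast_add_le_mul_natCast (n + 1).lt_succ_self x
    _ ≤ γ * ω := mul_le_mul_right (natCast_lt_omega0 _).le γ

/-- Places the `n`-th copy of `[1, γ]` onto `(γ * n, γ * (n + 1)]`. -/
def ordIccBlock (p : ℕ × OrdIcc γ) : OrdIcc (γ * ω) :=
  ⟨γ * p.1 + p.2, p.2.2.1.trans le_add_self, (mul_natCast_add_lt_mul_omega0 p.1 p.2).le⟩

theorem continuous_ordIccBlock : Continuous (ordIccBlock (γ := γ)) :=
  continuous_prod_of_discrete_left.2 fun n =>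
    ((isNormal_add_right (γ * n)).continuous.comp continuous_subtype_val).subtype_mk _

theorem injective_ordIccBlock : Injective (ordIccBlock (γ := γ)) := by
  rintro ⟨m, x⟩ ⟨n, y⟩ h
  have hval : γ * m + x = γ * n + y := congrArg Subtype.val h
  have hlt {k l : ℕ} (hkl : k < l) (u v : OrdIcc γ) : γ * k + u < γ * l + v :=
    (mul_natCast_add_le_mul_natCast hkl u).trans_lt (mul_natCast_lt_mul_natCast_add l v)
  rcases lt_trichotomy m n with hmn | rfl | hmn
  · exact absurd hval (hlt hmn x y).ne
  · exact Prod.ext rfl (Subtype.ext (add_left_cancel hval))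
  · exact absurd hval (hlt hmn y x).ne'

theorem range_ordIccBlock_mk (n : ℕ) :
    range (fun x : OrdIcc γ => ordIccBlock (n, x)) =
      Subtype.val ⁻¹' Ioc (γ * n) (γ * n + γ) := by
  ext ⟨z, hz⟩
  constructor
  · rintro ⟨x, hx⟩
    rw [← hx]
    exact ⟨mul_natCast_lt_mul_natCast_add n x, add_le_add_right x.2.2 _⟩
  · rintro ⟨hlt, hle⟩
    obtain ⟨x, rfl⟩ : ∃ x, z = γ * n + x := exists_add_of_le (le_of_lt hlt)
    exact ⟨⟨x, Order.one_le_iff_pos.2 (pos_of_lt_add_right hlt), le_of_add_le_add_left hle⟩, rfl⟩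

theorem isOpenEmbedding_ordIccBlock : IsOpenEmbedding (ordIccBlock (γ := γ)) := by
  refine .of_continuous_injective_isOpenMap continuous_ordIccBlock injective_ordIccBlock
    (isOpenMap_prod_of_discrete_left.2 fun n => IsOpenEmbedding.isOpenMap ?_)
  have hclosed : IsClosedEmbedding fun x : OrdIcc γ => ordIccBlock (n, x) :=
    (continuous_ordIccBlock.comp (Continuous.prodMk_right n)).isClosedEmbedding
      (injective_ordIccBlock.comp (Prod.mk_right_injective n))
  refine ⟨hclosed.isEmbedding, ?_⟩
  rw [range_ordIccBlock_mk]
  exact (isOpen_Ioc_ordinal _ _).preimage continuous_subtype_val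

theorem range_ordIccBlock (hone : 1 ≤ γ * ω) :
    range (ordIccBlock (γ := γ)) = {⟨γ * ω, hone, le_rfl⟩}ᶜ := by
  ext ⟨z, hz⟩
  constructor
  · rintro ⟨⟨n, x⟩, hx⟩ htop
    exact (mul_natCast_add_lt_mul_omega0 n x).ne (congrArg Subtype.val (hx.trans htop))
  · intro hne
    have hlt : z < γ * ω := lt_of_le_of_ne hz.2 fun h => hne (Subtype.ext h)
    obtain ⟨q, hq, x, hx, rfl⟩ := lt_mul_iff.1 hlt
    obtain ⟨n, rfl⟩ := lt_omega0.1 hq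
    by_cases hx0 : x = 0
    · subst hx0
      rcases n with _ | n
      · simp at hz
      · refine ⟨(n, ⟨γ, Order.one_le_iff_pos.2 hx, le_rfl⟩), Subtype.ext ?_⟩
        simp [ordIccBlock, mul_add_one]
    · exact ⟨(n, ⟨x, Order.one_le_iff_pos.2 (pos_iff_ne_zero.2 hx0), hx.le⟩), rfl⟩

/-- Multiplication by `ω` is the one-point compactification of countably many disjoint copies. -/
def onePointHomeoOrdIcc (hone : 1 ≤ γ * ω) : OnePoint (ℕ × OrdIcc γ) ≃ₜ OrdIcc (γ * ω) :=
  equivOfIsEmbeddingOfRangeEq ⟨γ * ω, hone, le_rfl⟩ ordIccBlock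
    isOpenEmbedding_ordIccBlock.isEmbedding (range_ordIccBlock hone)

end Blocks

theorem noSmallIndexNormalSubgroup_homeomorph_ordIcc_mul_omega0 {γ : Ordinal} (hone : 1 ≤ γ * ω)
    (htop : ∀ h : OrdIcc (γ * ω) ≃ₜ OrdIcc (γ * ω),
      h ⟨γ * ω, hone, le_rfl⟩ = ⟨γ * ω, hone, le_rfl⟩) :
    NoSmallIndexNormalSubgroup (OrdIcc (γ * ω) ≃ₜ OrdIcc (γ * ω)) := by
  let E := onePointHomeoOrdIcc hone
  have hinfty (h : OnePoint (ℕ × OrdIcc γ) ≃ₜ OnePoint (ℕ × OrdIcc γ)) : h ∞ = ∞ := by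
    have hE : E ∞ = ⟨γ * ω, hone, le_rfl⟩ := rfl
    have hfix := htop (homeoConj E h)
    rw [← hE] at hfix
    simpa [homeoConj] using hfix
  exact (noSmallIndexNormalSubgroup_homeomorph_prod.homeomorph_onePoint hinfty).of_surjective
    (homeoConj E).toMonoidHom (homeoConj E).surjective

end Ordinals

theorem no_small_index_normal_subgroup_succ_general (α : Ordinal)
    (N : Subgroup (OrdIcc (omega0 ^ (α + 1)) ≃ₜ OrdIcc (omega0 ^ (α + 1))))
    (hNnormal : N.Normal)
    (hN : Cardinal.mk ((OrdIcc (omega0 ^ (α + 1)) ≃ₜ OrdIcc (omega0 ^ (α + 1))) ⧸ N)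
      < 2 ^ Cardinal.aleph0) :
    N = ⊤ := by
  have hpow : ω ^ (α + 1) = ω ^ α * ω := opow_add_one ω α
  have hone : 1 ≤ ω ^ α * ω := hpow ▸ Order.one_le_iff_pos.2 (opow_pos _ omega0_pos)
  have hmul : NoSmallIndexNormalSubgroup (OrdIcc (ω ^ α * ω) ≃ₜ OrdIcc (ω ^ α * ω)) :=
    noSmallIndexNormalSubgroup_homeomorph_ordIcc_mul_omega0 hone
      (homeomorph_ordIcc_apply_top hpow.symm hone)
  rw [← hpow] at hmul
  exact hmul N hNnormal hN

/-- Let `α` be a countable ordinal. If the homeomorphism group of `[1, ω^α]`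
has no proper normal subgroup of index `< 2^ℵ₀`, then neither does the homeomorphism group
of `[1, ω^(α+1)]`. -/
theorem no_small_index_normal_subgroup_succ (α : Ordinal) (hα : α.card ≤ Cardinal.aleph0)
    (ih : ∀ N : Subgroup (OrdIcc (omega0 ^ α) ≃ₜ OrdIcc (omega0 ^ α)), N.Normal →
      Cardinal.mk ((OrdIcc (omega0 ^ α) ≃ₜ OrdIcc (omega0 ^ α)) ⧸ N) < 2 ^ Cardinal.aleph0 →
      N = ⊤)
    (N : Subgroup (OrdIcc (omega0 ^ (α + 1)) ≃ₜ OrdIcc (omega0 ^ (α + 1))))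
    (hNnormal : N.Normal)
    (hN : Cardinal.mk ((OrdIcc (omega0 ^ (α + 1)) ≃ₜ OrdIcc (omega0 ^ (α + 1))) ⧸ N)
      < 2 ^ Cardinal.aleph0) :
    N = ⊤ :=
  no_small_index_normal_subgroup_succ_general α N hNnormal hN
end
end

section
/- Let α be a countable ordinal, δ = ω^(α+1), X = [1, δ] with the order topology, G the group of homeomorphisms of X, and K the subgroup of G consisting of those g with g(A_n) = A_n for every n ≥ 1, where A_n = [ω^α·(n−1)+1, ω^α·n]. If N is a normal subgroup of G whose index, as a cardinal, is strictly less than 2^ℵ₀, then K ≤ N. -/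
open Ordinal Topology

noncomputable section

/-- `X = [1, δ]` where `δ = ω^(α+1)`. -/
abbrev Xsp (α : Ordinal) : Type _ := OrdIcc (omega0 ^ (α + 1))

lemma omega_pow_mul_mem (α : Ordinal) (m : ℕ+) :
    omega0 ^ α * ((m : ℕ) : Ordinal) ∈ Set.Icc (1 : Ordinal) (omega0 ^ (α + 1)) := by
  constructor
  · have h1 : (1 : Ordinal) ≤ omega0 ^ α := Order.one_le_iff_pos.2 (opow_pos _ omega0_pos)
    have h2 : (1 : Ordinal) ≤ ((m : ℕ) : Ordinal) := by exact_mod_cast m.one_le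
    calc (1 : Ordinal) = 1 * 1 := (one_mul 1).symm
      _ ≤ omega0 ^ α * ((m : ℕ) : Ordinal) := mul_le_mul' h1 h2
  · rw [Ordinal.add_one_eq_succ, Ordinal.opow_succ]
    exact mul_le_mul' le_rfl (Ordinal.nat_lt_omega0 m).le

/-- The point `ω^α·m` of `X` (for `m ≥ 1`). -/
def pt (α : Ordinal) (m : ℕ+) : Xsp α :=
  ⟨omega0 ^ α * ((m : ℕ) : Ordinal), omega_pow_mul_mem α m⟩

/-- `A_n = [ω^α·(n−1)+1, ω^α·n]`, as a subset of `X`. -/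
def Ablock (α : Ordinal) (n : ℕ+) : Set (Xsp α) :=
  {x : Xsp α | (x : Ordinal) ∈
    Set.Icc (omega0 ^ α * (((n : ℕ) - 1 : ℕ) : Ordinal) + 1) (omega0 ^ α * ((n : ℕ) : Ordinal))}

/-- The defining property of the homomorphism `π : G → Sym({1,2,…})`:
`π(g)(m) = n` iff `g(ω^α·m) = ω^α·n`. -/
def IsBlockPerm (α : Ordinal) (π : (Xsp α ≃ₜ Xsp α) → Equiv.Perm ℕ+) : Prop :=
  ∀ (g : Xsp α ≃ₜ Xsp α) (m : ℕ+), g (pt α m) = pt α (π g m)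

/-!
`G` contains a copy of the unrestricted wreath product `Homeo(A) ≀ Sym(ℕ)`, where `A = [1, ω^α]`,
and `K` is its base group, so that it suffices to work inside this copy.

Index the factors by `ℤ × ℕ × ℕ`, and let `u : ℕ → ℤ` act by translating the `ℤ`-coordinate by
`u a` on the row with middle coordinate `a`. As there are `2^ℵ₀` such `u`, some nontrivial one acts
by a permutation `σ ∈ N`. If `u a ≠ 0`, then `S = {0} × {a} × ℕ` never returns to itself under
`σ⁻¹`, so every family `φ` supported on `S` has the form `φ = ψ (ψ ∘ σ⁻¹)⁻¹`: this is the commutator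
of `ψ` and `σ`, which lies in `N`. Finally, `S` and its complement are both infinite, so any family
is a product of one supported on `S` and a conjugate of one supported on `S`.
-/

open Set Function Cardinal

section Wandering

variable {I J H : Type*}

/-- `S` is a wandering set for `τ`: no point of `S` ever returns to `S` under iteration of `τ`. -/
def IsWandering (τ : I → I) (S : Set I) : Prop :=
  ∀ i ∈ S, ∀ n : ℕ, τ^[n + 1] i ∉ S

lemma IsWandering.preimage {τ : I → I} {τ' : J → J} {S : Set J} (hS : IsWandering τ' S)
    {e : I → J} (he : Semiconj e τ τ') : IsWandering τ (e ⁻¹' S) := by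
  intro i hi n hn
  rw [mem_preimage, (he.iterate_right (n + 1)).eq] at hn
  exact hS (e i) hi n hn

/-- `ψ` is the infinite product `φ · (φ ∘ τ) · (φ ∘ τ²) ⋯`: since `S` is wandering, at most one
factor differs from `1` at any given point. -/
lemma IsWandering.exists_mul_comp_eq [MulOneClass H] {τ : I → I} {S : Set I}
    (hS : IsWandering τ S) {φ : I → H} (hφ : mulSupport φ ⊆ S) :
    ∃ ψ : I → H, φ * (ψ ∘ τ) = ψ := by
  classical
  let ψ : I → H := fun i ↦
    if h : ∃ n : ℕ, τ^[n] i ∈ S then φ (τ^[Nat.find h] i) else 1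
  refine ⟨ψ, funext fun i ↦ ?_⟩
  change φ i * ψ (τ i) = ψ i
  by_cases hi : i ∈ S
  · have hψi : ψ i = φ i := by
      have h : ∃ n : ℕ, τ^[n] i ∈ S := ⟨0, hi⟩
      simp only [ψ, dif_pos h, (Nat.find_eq_zero h).2 hi, iterate_zero, id_eq]
    have hψτ : ψ (τ i) = 1 := dif_neg fun ⟨n, hn⟩ ↦ hS i hi n hn
    rw [hψi, hψτ, mul_one]
  · rw [notMem_mulSupport.1 fun h ↦ hi (hφ h), one_mul]
    by_cases h : ∃ n : ℕ, τ^[n] (τ i) ∈ S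
    · have h' : ∃ n : ℕ, τ^[n] i ∈ S := h.imp' (· + 1) fun _ ↦ id
      simp only [ψ, dif_pos h, dif_pos h', Nat.find_comp_succ h' h hi, iterate_succ_apply]
    · have h' : ¬∃ n : ℕ, τ^[n] i ∈ S := by
        rintro ⟨_ | n, hn⟩
        exacts [hi hn, h ⟨n, hn⟩]
      simp only [ψ, dif_neg h, dif_neg h']

end Wandering

section Permutations

/-- The action of `ℕ → ℤ` on `ℤ × ℕ × ℕ` in which `u` translates the `ℤ`-coordinate by `u a` on the
row of points with middle coordinate `a`. -/
def rowShift : Multiplicative (ℕ → ℤ) →* Equiv.Perm (ℤ × ℕ × ℕ) where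
  toFun u := Equiv.prodCongrLeft fun q ↦ Equiv.addRight (u.toAdd q.1)
  map_one' := by ext <;> simp
  map_mul' u v := by ext <;> simp [add_comm, add_left_comm]

lemma rowShift_symm_apply (u : Multiplicative (ℕ → ℤ)) (m : ℤ) (q : ℕ × ℕ) :
    (rowShift u).symm (m, q) = (m - u.toAdd q.1, q) :=
  rfl

lemma isWandering_rowShift_symm {u : Multiplicative (ℕ → ℤ)} {a : ℕ} (ha : u.toAdd a ≠ 0) :
    IsWandering (rowShift u).symm (range fun b : ℕ ↦ ((0, a, b) : ℤ × ℕ × ℕ)) := by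
  have iterate_eq (n b : ℕ) :
      (rowShift u).symm^[n] (0, a, b) = (-(n * u.toAdd a), a, b) := by
    induction n with
    | zero => simp
    | succ n ih =>
      rw [iterate_succ_apply', ih, rowShift_symm_apply]
      push_cast
      congr 1
      ring
  rintro _ ⟨b, rfl⟩ n ⟨b', hb'⟩
  have h0 := congrArg Prod.fst (hb'.trans (iterate_eq (n + 1) b))
  exact neg_ne_zero.2 (mul_ne_zero (by positivity) ha) h0.symm

lemma exists_perm_mapsTo_compl {I : Type*} [Countable I] {S : Set I} (hS : S.Infinite)
    (hS' : Sᶜ.Infinite) : ∃ τ : Equiv.Perm I, MapsTo τ Sᶜ S := by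
  classical
  have := hS.to_subtype
  have := hS'.to_subtype
  obtain ⟨e⟩ : Nonempty (S ≃ (Sᶜ : Set I)) := nonempty_equiv_of_countable
  refine ⟨(Equiv.Set.sumCompl S).permCongr ((Equiv.sumCongr e e.symm).trans (Equiv.sumComm _ _)),
    fun i hi ↦ ?_⟩
  simp [Equiv.permCongr_apply, Equiv.Set.sumCompl_symm_apply_of_notMem hi]

end Permutations

section SmallIndex

universe u v

lemma exists_ne_one_map_mem {D : Type u} {G : Type v} [Group D] [Group G] (q : D →* G)
    (N : Subgroup G) (hN : lift.{u} #(G ⧸ N) < lift.{v} #D) : ∃ d ≠ 1, q d ∈ N := by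
  by_contra! hq
  refine hN.not_ge (lift_mk_le_lift_mk_of_injective (f := fun d ↦ (q d : G ⧸ N)) fun x y hxy ↦ ?_)
  by_contra hne
  refine hq (x⁻¹ * y) (fun h ↦ hne (inv_mul_eq_one.1 h)) ?_
  rw [map_mul, map_inv]
  exact QuotientGroup.eq.1 hxy

lemma exists_isWandering_symm_map_mem {I : Type u} {G : Type v} [Countable I] [Infinite I]
    [Group G] (p : Equiv.Perm I →* G) (N : Subgroup G) (hN : #(G ⧸ N) < 2 ^ ℵ₀) :
    ∃ σ : Equiv.Perm I, p σ ∈ N ∧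
      ∃ S : Set I, S.Infinite ∧ Sᶜ.Infinite ∧ IsWandering σ.symm S := by
  obtain ⟨e⟩ : Nonempty (I ≃ ℤ × ℕ × ℕ) := nonempty_equiv_of_countable
  let shift : Multiplicative (ℕ → ℤ) →* Equiv.Perm I :=
    e.symm.permCongrHom.toMonoidHom.comp rowShift
  have mk_shifts : #(Multiplicative (ℕ → ℤ)) = 2 ^ ℵ₀ := by
    rw [two_power_aleph0, ← aleph0_power_aleph0]
    simp [Multiplicative]
  obtain ⟨u, hu, hmem⟩ := exists_ne_one_map_mem (p.comp shift) N (by simpa [mk_shifts] using hN)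
  obtain ⟨a, ha⟩ : ∃ a, u.toAdd a ≠ 0 := Function.ne_iff.1 hu
  let row (m : ℤ) : Set (ℤ × ℕ × ℕ) := range fun b : ℕ ↦ (m, a, b)
  have infinite_row (m : ℤ) : (e ⁻¹' row m).Infinite :=
    (infinite_range_of_injective fun b b' h ↦ by simpa using h).preimage (by simp)
  refine ⟨shift u, hmem, e ⁻¹' row 0, infinite_row 0, (infinite_row 1).mono ?_, ?_⟩
  · rintro i ⟨b, hb⟩ ⟨b', hb'⟩
    simpa using congrArg Prod.fst (hb.trans hb'.symm)
  · exact (isWandering_rowShift_symm ha).preimage fun i ↦ e.apply_symm_apply _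

end SmallIndex

section CovariantPair

variable {I H G G' : Type*} [Group H] [Group G] [Group G']

/-- A covariant pair: homomorphisms `f` and `p` that jointly amount to a homomorphism to `G` from
the unrestricted wreath product `H ≀ Perm I`, given on the base group and on the permutations. -/
def IsCovariantPair (f : (I → H) →* G) (p : Equiv.Perm I →* G) : Prop :=
  ∀ (σ : Equiv.Perm I) (φ : I → H), f (φ ∘ σ.symm) = p σ * f φ * (p σ)⁻¹

namespace IsCovariantPair

variable {f : (I → H) →* G} {p : Equiv.Perm I →* G}

lemma monoidHom_comp (h : IsCovariantPair f p) (F : G →* G') :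
    IsCovariantPair (F.comp f) (F.comp p) := fun σ φ ↦ by
  simp only [MonoidHom.comp_apply, h σ φ, map_mul, map_inv]

variable {N : Subgroup G} [hnorm : N.Normal]

lemma map_comp_symm_mem_iff (h : IsCovariantPair f p) (σ : Equiv.Perm I) (φ : I → H) :
    f (φ ∘ σ.symm) ∈ N ↔ f φ ∈ N := by
  rw [h σ φ]
  exact hnorm.mem_comm_iff.trans (by rw [inv_mul_cancel_left])

lemma map_mem_of_mul_comp_symm_eq (h : IsCovariantPair f p) {σ : Equiv.Perm I} (hσ : p σ ∈ N)
    {φ ψ : I → H} (hψ : φ * (ψ ∘ σ.symm) = ψ) : f φ ∈ N := by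
  have hcomm : f φ = f ψ * p σ * (f ψ)⁻¹ * (p σ)⁻¹ := by
    rw [eq_mul_inv_of_mul_eq hψ, map_mul, map_inv, h σ ψ]
    group
  rw [hcomm]
  exact N.mul_mem (hnorm.conj_mem _ hσ _) (N.inv_mem hσ)

theorem map_mem_of_mk_quotient_lt [Countable I] [Infinite I] (h : IsCovariantPair f p)
    (hN : #(G ⧸ N) < 2 ^ ℵ₀) (φ : I → H) : f φ ∈ N := by
  obtain ⟨σ, hσ, S, hS, hS', hwand⟩ := exists_isWandering_symm_map_mem p N hN
  have map_mem_of_support {χ : I → H} (hχ : mulSupport χ ⊆ S) : f χ ∈ N := by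
    obtain ⟨ψ, hψ⟩ := hwand.exists_mul_comp_eq hχ
    exact h.map_mem_of_mul_comp_symm_eq hσ hψ
  obtain ⟨τ, hτ⟩ := exists_perm_mapsTo_compl hS hS'
  rw [← mulIndicator_self_mul_compl S φ, map_mul]
  refine N.mul_mem (map_mem_of_support mulSupport_mulIndicator_subset) ?_
  refine (h.map_comp_symm_mem_iff τ _).1 (map_mem_of_support fun i hi ↦ ?_)
  have hmem : τ.symm i ∈ Sᶜ := mulSupport_mulIndicator_subset (f := φ) hi
  simpa using hτ hmem

end IsCovariantPair

end CovariantPair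

section Homeomorphisms

variable {I A X Y : Type*} [TopologicalSpace A] [TopologicalSpace X] [TopologicalSpace Y]

/-- Extension of homeomorphisms of `Y` to its one-point compactification, which `e` identifies
with `X`. -/
def extendHom (e : OnePoint Y ≃ₜ X) : (Y ≃ₜ Y) →* (X ≃ₜ X) :=
  MonoidHom.mk' (fun f ↦ (e.symm.trans f.onePointCongr).trans e) fun f g ↦ by
    refine Homeomorph.ext fun x ↦ congrArg e ?_
    change OnePoint.map (f ∘ g) (e.symm x) =
      OnePoint.map f (e.symm (e (OnePoint.map g (e.symm x))))
    rw [e.symm_apply_apply, OnePoint.map_comp, comp_apply]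

lemma extendHom_apply_coe (e : OnePoint Y ≃ₜ X) (f : Y ≃ₜ Y) (y : Y) :
    extendHom e f (e y) = e (f y) := by
  simp [extendHom]

section Fibers

variable [TopologicalSpace I] [DiscreteTopology I]

/-- The homeomorphisms of `I × A` acting by a homeomorphism on each fiber `{i} × A`. -/
def fiberwiseHom : (I → A ≃ₜ A) →* (I × A ≃ₜ I × A) where
  toFun φ :=
    { toEquiv := Equiv.prodCongrRight fun i ↦ (φ i).toEquiv
      continuous_toFun := continuous_prod_of_discrete_left.2 fun i ↦
        (Continuous.prodMk_right i).comp (φ i).continuous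
      continuous_invFun := continuous_prod_of_discrete_left.2 fun i ↦
        (Continuous.prodMk_right i).comp (φ i).symm.continuous }
  map_one' := rfl
  map_mul' _ _ := rfl

lemma fiberwiseHom_apply (φ : I → A ≃ₜ A) (i : I) (a : A) :
    fiberwiseHom φ (i, a) = (i, φ i a) :=
  rfl

variable (I A) in
/-- The homeomorphisms of `I × A` permuting the fibers `{i} × A`. -/
def permuteFibersHom : Equiv.Perm I →* (I × A ≃ₜ I × A) where
  toFun σ := σ.toHomeomorphOfDiscrete.prodCongr (Homeomorph.refl A)
  map_one' := rfl
  map_mul' _ _ := rfl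

lemma isCovariantPair_fiberwiseHom_permuteFibersHom :
    IsCovariantPair fiberwiseHom (permuteFibersHom I A) := fun σ φ ↦ by
  ext1 ⟨i, a⟩
  change (i, φ (σ.symm i) a) = (σ (σ.symm i), φ (σ.symm i) a)
  rw [σ.apply_symm_apply]

end Fibers

lemma exists_homeomorph_semiconj {F : A → X} (hF : IsEmbedding F) (g : X ≃ₜ X)
    (hg : g '' range F = range F) : ∃ φ : A ≃ₜ A, Semiconj F φ g := by
  let r := hF.toHomeomorph
  refine ⟨r.trans (((g.image (range F)).trans (.setCongr hg)).trans r.symm), fun a ↦ ?_⟩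
  exact congrArg Subtype.val (r.apply_symm_apply _)

lemma equiv_eq_of_eqOn_compl_singleton {α β : Type*} {f g : α ≃ β} {d : α}
    (h : EqOn f g {d}ᶜ) : f = g := by
  refine Equiv.ext fun x ↦ ?_
  by_contra hx
  obtain rfl : x = d := not_not.1 fun hxd ↦ hx (h hxd)
  have hne : g.symm (f x) ≠ x := fun h' ↦ hx (g.symm_apply_eq.1 h')
  exact hne (f.injective ((h hne).trans (g.apply_symm_apply _)))

variable [TopologicalSpace I] [DiscreteTopology I]

lemma exists_extendHom_fiberwiseHom_eq (e : OnePoint (I × A) ≃ₜ X) (g : X ≃ₜ X)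
    (hg : ∀ i : I, g '' range (fun a : A ↦ e ↑(i, a)) = range fun a : A ↦ e ↑(i, a)) :
    ∃ φ : I → A ≃ₜ A, extendHom e (fiberwiseHom φ) = g := by
  have isEmbedding_fiber (i : I) : IsEmbedding fun a : A ↦ e ↑(i, a) :=
    e.isEmbedding.comp
      (OnePoint.isOpenEmbedding_coe.isEmbedding.comp (isEmbedding_prodMkRight i))
  choose φ hφ using fun i ↦ exists_homeomorph_semiconj (isEmbedding_fiber i) g (hg i)
  have agree : EqOn (extendHom e (fiberwiseHom φ)).toEquiv g.toEquiv {e OnePoint.infty}ᶜ := by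
    intro x hx
    obtain ⟨z, rfl⟩ := e.surjective x
    induction z using OnePoint.rec with
    | infty => exact absurd rfl hx
    | coe z =>
      calc extendHom e (fiberwiseHom φ) (e z) = e ↑(z.1, φ z.1 z.2) := by
            rw [extendHom_apply_coe, fiberwiseHom_apply]
        _ = g (e z) := hφ z.1 z.2
  exact ⟨φ, Homeomorph.toEquiv_injective (equiv_eq_of_eqOn_compl_singleton agree)⟩

theorem mem_of_forall_image_fiber_eq [Countable I] [Infinite I] (e : OnePoint (I × A) ≃ₜ X)
    (N : Subgroup (X ≃ₜ X)) [N.Normal] (hN : #((X ≃ₜ X) ⧸ N) < 2 ^ ℵ₀) (g : X ≃ₜ X)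
    (hg : ∀ i : I, g '' range (fun a : A ↦ e ↑(i, a)) = range fun a : A ↦ e ↑(i, a)) :
    g ∈ N := by
  obtain ⟨φ, rfl⟩ := exists_extendHom_fiberwiseHom_eq e g hg
  have hpair := isCovariantPair_fiberwiseHom_permuteFibersHom (I := I) (A := A)
  exact (hpair.monoidHom_comp (extendHom e)).map_mem_of_mk_quotient_lt hN φ

end Homeomorphisms

section Blocks

variable {α : Ordinal}

lemma mem_Ablock {n : ℕ+} {x : Xsp α} :
    x ∈ Ablock α n ↔ ω ^ α * ((n - 1 : ℕ) : Ordinal) < x ∧ (x : Ordinal) ≤ ω ^ α * (n : ℕ) := by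
  simp [Ablock, Order.add_one_le_iff]

lemma isOpen_Ablock (n : ℕ+) : IsOpen (Ablock α n) := by
  have hpre : Ablock α n = Subtype.val ⁻¹'
      Ioo (ω ^ α * ((n - 1 : ℕ) : Ordinal)) (Order.succ (ω ^ α * (n : ℕ))) := by
    ext x
    simp only [mem_Ablock, mem_preimage, mem_Ioo, Order.lt_succ_iff]
  rw [hpre]
  exact isOpen_Ioo.preimage continuous_subtype_val

lemma lt_of_mem_Ablock_of_mem_Ablock {m n : ℕ+} (hmn : m < n) {x y : Xsp α}
    (hx : x ∈ Ablock α m) (hy : y ∈ Ablock α n) : x < y :=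
  calc (x : Ordinal) ≤ ω ^ α * (m : ℕ) := (mem_Ablock.1 hx).2
    _ ≤ ω ^ α * ((n - 1 : ℕ) : Ordinal) := by
      gcongr
      exact Nat.le_sub_one_of_lt hmn
    _ < y := (mem_Ablock.1 hy).1

lemma eq_of_mem_Ablock {m n : ℕ+} {x : Xsp α} (hm : x ∈ Ablock α m) (hn : x ∈ Ablock α n) :
    m = n := by
  by_contra hne
  rcases lt_or_gt_of_ne hne with h | h
  exacts [(lt_of_mem_Ablock_of_mem_Ablock h hm hn).false,
    (lt_of_mem_Ablock_of_mem_Ablock h hn hm).false]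

variable (α)

/-- The point `δ = ω^(α+1)` of `X`. -/
def topPoint : Xsp α :=
  ⟨ω ^ (α + 1), Order.one_le_iff_pos.2 (opow_pos _ omega0_pos), le_rfl⟩

lemma iUnion_Ablock : ⋃ n, Ablock α n = {topPoint α}ᶜ := by
  have hδ : ω ^ (α + 1) = ω ^ α * ω := by rw [opow_add, opow_one]
  ext x
  have hx : x ∈ ({topPoint α}ᶜ : Set (Xsp α)) ↔ (x : Ordinal) < ω ^ α * ω := by
    rw [← hδ, lt_iff_le_and_ne, and_iff_right x.2.2]
    exact not_congr Subtype.ext_iff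
  rw [hx, mem_iUnion]
  constructor
  · rintro ⟨n, hn⟩
    refine (mem_Ablock.1 hn).2.trans_lt ?_
    gcongr
    exacts [opow_pos _ omega0_pos, natCast_lt_omega0 n]
  · intro hlt
    obtain ⟨c, hc, hxc⟩ := (lt_mul_iff_of_isSuccLimit isSuccLimit_omega0).1 hlt
    obtain ⟨k, rfl⟩ := lt_omega0.1 hc
    have hex : ∃ k : ℕ, (x : Ordinal) ≤ ω ^ α * k := ⟨k, hxc.le⟩
    classical
    have hpos : 0 < Nat.find hex := by
      rw [Nat.find_pos, Nat.cast_zero, mul_zero, not_le]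
      exact Order.one_le_iff_pos.1 x.2.1
    refine ⟨⟨Nat.find hex, hpos⟩, mem_Ablock.2 ⟨?_, Nat.find_spec hex⟩⟩
    exact not_le.1 (Nat.find_min hex (Nat.sub_one_lt hpos.ne'))

lemma opow_mul_pred_add (n : ℕ+) :
    ω ^ α * ((n - 1 : ℕ) : Ordinal) + ω ^ α = ω ^ α * (n : ℕ) := by
  rw [← mul_add_one, ← Nat.cast_add_one, Nat.sub_one_add_one n.ne_zero]

lemma opow_mul_pred_add_mem (n : ℕ+) (a : OrdIcc (ω ^ α)) :
    ω ^ α * ((n - 1 : ℕ) : Ordinal) + a ∈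
      Ioc (ω ^ α * ((n - 1 : ℕ) : Ordinal)) (ω ^ α * (n : ℕ)) := by
  rw [← opow_mul_pred_add]
  refine ⟨lt_add_of_pos_right _ (Order.one_le_iff_pos.1 a.2.1), ?_⟩
  gcongr
  exact a.2.2

/-- The point `ω^α·(n−1) + a` of `A_n`, for `p = (n, a)`; thus each block is parametrized by
`[1, ω^α]`. -/
def blockPoint (p : ℕ+ × OrdIcc (ω ^ α)) : Xsp α :=
  ⟨ω ^ α * ((p.1 - 1 : ℕ) : Ordinal) + p.2,
    Order.one_le_iff_pos.2 (zero_le.trans_lt (opow_mul_pred_add_mem α p.1 p.2).1),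
    (opow_mul_pred_add_mem α p.1 p.2).2.trans (omega_pow_mul_mem α p.1).2⟩

lemma range_blockPoint_right (n : ℕ+) : range (fun a ↦ blockPoint α (n, a)) = Ablock α n := by
  refine Subset.antisymm (range_subset_iff.2 fun a ↦
    mem_Ablock.2 (opow_mul_pred_add_mem α n a)) fun x hx ↦ ?_
  obtain ⟨hlo, hhi⟩ := mem_Ablock.1 hx
  have hadd := Ordinal.add_sub_cancel_of_le hlo.le
  refine ⟨⟨x - ω ^ α * ((n - 1 : ℕ) : Ordinal), ?_, ?_⟩, Subtype.ext hadd⟩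
  · rwa [le_sub_of_le hlo.le, Order.add_one_le_iff]
  · rwa [Ordinal.sub_le, opow_mul_pred_add]

lemma range_blockPoint : range (blockPoint α) = {topPoint α}ᶜ := by
  rw [← iUnion_Ablock]
  simp_rw [← range_blockPoint_right]
  ext x
  simp

lemma blockPoint_injective : Injective (blockPoint α) := by
  rintro ⟨m, a⟩ ⟨n, b⟩ hab
  have hmem (k : ℕ+) (c : OrdIcc (ω ^ α)) : blockPoint α (k, c) ∈ Ablock α k :=
    range_blockPoint_right α k ▸ mem_range_self c
  obtain rfl : m = n := eq_of_mem_Ablock (hmem m a) (hab ▸ hmem n b)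
  exact Prod.ext rfl (Subtype.ext (add_left_cancel (congrArg Subtype.val hab)))

lemma isOpenEmbedding_blockPoint : IsOpenEmbedding (blockPoint α) := by
  have hcont (n : ℕ+) : Continuous fun a ↦ blockPoint α (n, a) :=
    Continuous.subtype_mk ((isNormal_add_right (ω ^ α * ((n - 1 : ℕ) : Ordinal))).continuous.comp
      continuous_subtype_val) _
  refine .of_continuous_injective_isOpenMap (continuous_prod_of_discrete_left.2 hcont)
    (blockPoint_injective α) (isOpenMap_prod_of_discrete_left.2 fun n ↦ ?_)
  have hinj : Injective fun a ↦ blockPoint α (n, a) :=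
    (blockPoint_injective α).comp (Prod.mk_right_injective n)
  refine IsOpenEmbedding.isOpenMap ⟨((hcont n).isClosedEmbedding hinj).isEmbedding, ?_⟩
  rw [range_blockPoint_right]
  exact isOpen_Ablock n

/-- `X` as the one-point compactification, by `δ`, of countably many copies of `[1, ω^α]`. -/
def onePointBlocksHomeomorph : OnePoint (ℕ+ × OrdIcc (ω ^ α)) ≃ₜ Xsp α :=
  OnePoint.equivOfIsEmbeddingOfRangeEq (topPoint α) (blockPoint α)
    (isOpenEmbedding_blockPoint α).isEmbedding (range_blockPoint α)

lemma range_onePointBlocksHomeomorph (n : ℕ+) :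
    range (fun a : OrdIcc (ω ^ α) ↦ onePointBlocksHomeomorph α ↑(n, a)) = Ablock α n :=
  range_blockPoint_right α n

end Blocks

theorem blockwise_subgroup_le_normal_general (α : Ordinal)
    (N : Subgroup (Xsp α ≃ₜ Xsp α)) (hNnormal : N.Normal)
    (hN : Cardinal.mk ((Xsp α ≃ₜ Xsp α) ⧸ N) < 2 ^ Cardinal.aleph0)
    (g : Xsp α ≃ₜ Xsp α) (hg : ∀ n : ℕ+, ⇑g '' Ablock α n = Ablock α n) :
    g ∈ N := by
  refine mem_of_forall_image_fiber_eq (onePointBlocksHomeomorph α) N hN g fun n ↦ ?_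
  rw [range_onePointBlocksHomeomorph]
  exact hg n

/-- Let `α` be a countable ordinal, `δ = ω^(α+1)`, `X = [1, δ]`, `G` the
homeomorphism group of `X`, and `K ≤ G` the subgroup of those `g` fixing each
`A_n = [ω^α·(n−1)+1, ω^α·n]` setwise. If `N` is a normal subgroup of `G` of index `< 2^ℵ₀`,
then `K ≤ N`. -/
theorem blockwise_subgroup_le_normal (α : Ordinal) (hα : α.card ≤ Cardinal.aleph0)
    (N : Subgroup (Xsp α ≃ₜ Xsp α)) (hNnormal : N.Normal)
    (hN : Cardinal.mk ((Xsp α ≃ₜ Xsp α) ⧸ N) < 2 ^ Cardinal.aleph0)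
    (g : Xsp α ≃ₜ Xsp α) (hg : ∀ n : ℕ+, ⇑g '' Ablock α n = Ablock α n) :
    g ∈ N :=
  blockwise_subgroup_le_normal_general α N hNnormal hN g hg
end
end

section
/- Let α be a countable ordinal, δ = ω^(α+1), X = [1, δ] with the order topology, G the group of homeomorphisms of X, A_n = [ω^α·(n−1)+1, ω^α·n] for n ≥ 1, and π : G → Sym({1,2,…}) the homomorphism determined by π(g)(m) = n iff g(ω^α·m) = ω^α·n. Let g ∈ G, i ≥ 1, and let B be a clopen cofinal subset of A_i such that g(B) ⊆ A_{π(g)(i)}. Then (P_i(g), Q_i(g)) ∼ (A_{π(g)(i)} \ g(B), A_i \ B), where P_i(g) = A_{π(g)(i)} \ g(A_i) and Q_i(g) = A_i \ g⁻¹(A_{π(g)(i)}). -/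
open Ordinal Topology

noncomputable section

/-- `P_i(g) = A_{π(g)(i)} \ g(A_i)`. -/
def Pset (α : Ordinal) (π : (Xsp α ≃ₜ Xsp α) → Equiv.Perm ℕ+)
    (g : Xsp α ≃ₜ Xsp α) (i : ℕ+) : Set (Xsp α) :=
  Ablock α (π g i) \ (⇑g '' Ablock α i)

/-- `Q_i(g) = A_i \ g⁻¹(A_{π(g)(i)})`. -/
def Qset (α : Ordinal) (π : (Xsp α ≃ₜ Xsp α) → Equiv.Perm ℕ+)
    (g : Xsp α ≃ₜ Xsp α) (i : ℕ+) : Set (Xsp α) :=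
  Ablock α i \ (⇑g ⁻¹' Ablock α (π g i))

/-- `(P₁, Q₁) ∼ (P₂, Q₂)` iff the topological disjoint union `P₁ ⊔ Q₂` is homeomorphic
to `P₂ ⊔ Q₁`. -/
def PairSim (P₁ Q₁ P₂ Q₂ : Type*) [TopologicalSpace P₁] [TopologicalSpace Q₁]
    [TopologicalSpace P₂] [TopologicalSpace Q₂] : Prop :=
  Nonempty ((P₁ ⊕ Q₂) ≃ₜ (P₂ ⊕ Q₁))

/-- A subset `S` of `A_i` is bounded if it is contained in `[ω^α·(i−1)+1, x]`
for some `x < ω^α·i`. -/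
def BoundedIn (α : Ordinal) (i : ℕ+) (S : Set (Xsp α)) : Prop :=
  ∃ x : Ordinal, x < omega0 ^ α * ((i : ℕ) : Ordinal) ∧
    ∀ y ∈ S, (y : Ordinal) ∈ Set.Icc (omega0 ^ α * (((i : ℕ) - 1 : ℕ) : Ordinal) + 1) x

/-!
Pull everything back to the domain of `g`: with `C = g⁻¹(A_{π(g)(i)})`, the claim becomes
`(C \ A) ⊔ (A \ B) ≅ (C \ B) ⊔ (A \ C)` for clopen sets `A`, `C` and `B ⊆ A ∩ C`.
Cutting `A \ B` along `C` and `C \ B` along `A` leaves the same piece `(A ∩ C) \ B` on both sides,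
so both sides are homeomorphic to `(C \ A) ⊔ ((A ∩ C) \ B) ⊔ (A \ C)`.
-/

/-- The decomposition of `Z` as the topological disjoint union of two open pieces `P` and `Q`,
given by open embeddings with complementary ranges. -/
def sumHomeomorphOfIsComplRange {P Q Z : Type*} [TopologicalSpace P] [TopologicalSpace Q]
    [TopologicalSpace Z] {i : P → Z} {j : Q → Z} (hi : IsOpenEmbedding i)
    (hj : IsOpenEmbedding j) (hij : IsCompl (Set.range i) (Set.range j)) : P ⊕ Q ≃ₜ Z :=
  have isOpenEmbedding_sumElim : IsOpenEmbedding (Sum.elim i j) :=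
    hi.sumElim hj <| hi.injective.sumElim hj.injective fun p q =>
      Set.disjoint_range_iff.1 hij.disjoint p q
  isOpenEmbedding_sumElim.toHomeomorphOfSurjective <| Set.range_eq_univ.1 <| by
    rw [Set.Sum.elim_range]
    exact hij.sup_eq_top

section Cutting

variable {X Y : Type*} [TopologicalSpace X] [TopologicalSpace Y]

/-- The decomposition of `A \ B` as a topological disjoint union, cut along a clopen `C ⊇ B`. -/
def sdiffSumInterSdiffHomeomorph {B C : Set X} (A : Set X) (hC : IsClopen C) (hBC : B ⊆ C) :
    ↥(A \ C) ⊕ ↥((A ∩ C) \ B) ≃ₜ ↥(A \ B) :=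
  have outside_subset : A \ C ⊆ A \ B := Set.sdiff_subset_sdiff_right hBC
  have inside_subset : (A ∩ C) \ B ⊆ A \ B := Set.sdiff_subset_sdiff_left Set.inter_subset_left
  have range_outside : Set.range (Set.inclusion outside_subset) = (Subtype.val ⁻¹' C)ᶜ := by
    ext ⟨x, hxA, _⟩
    simp [hxA]
  have range_inside : Set.range (Set.inclusion inside_subset) = Subtype.val ⁻¹' C := by
    ext ⟨x, hxA, hxB⟩
    simp [hxA, hxB]
  have hC_preimage : IsClopen (Subtype.val ⁻¹' C : Set ↥(A \ B)) :=
    hC.preimage continuous_subtype_val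
  sumHomeomorphOfIsComplRange
    ⟨.inclusion outside_subset, range_outside ▸ hC_preimage.compl.isOpen⟩
    ⟨.inclusion inside_subset, range_inside ▸ hC_preimage.isOpen⟩
    (by rw [range_outside, range_inside]; exact isCompl_compl.symm)

theorem pairSim_sdiff {A B C : Set X} (hA : IsClopen A) (hC : IsClopen C) (hB : B ⊆ A ∩ C) :
    PairSim ↥(C \ A) ↥(A \ C) ↥(C \ B) ↥(A \ B) := by
  obtain ⟨hBA, hBC⟩ := Set.subset_inter_iff.1 hB
  let cutA : ↥(A \ B) ≃ₜ ↥((A ∩ C) \ B) ⊕ ↥(A \ C) :=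
    (sdiffSumInterSdiffHomeomorph A hC hBC).symm.trans (.sumComm _ _)
  let cutC : ↥(C \ A) ⊕ ↥((A ∩ C) \ B) ≃ₜ ↥(C \ B) :=
    (Homeomorph.sumCongr (.refl _) (.setCongr (by rw [Set.inter_comm]))).trans
      (sdiffSumInterSdiffHomeomorph C hA hBA)
  let regroup : ↥(C \ A) ⊕ (↥((A ∩ C) \ B) ⊕ ↥(A \ C)) ≃ₜ
      (↥(C \ A) ⊕ ↥((A ∩ C) \ B)) ⊕ ↥(A \ C) := (Homeomorph.sumAssoc _ _ _).symm
  exact ⟨(Homeomorph.sumCongr (.refl _) cutA).trans (regroup.trans (cutC.sumCongr (.refl _)))⟩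

/-- The restriction of `g` to `g⁻¹(T) \ S`, as a homeomorphism onto `T \ g(S)`. -/
def preimageSdiffHomeomorph (g : X ≃ₜ Y) (S : Set X) (T : Set Y) :
    ↥(⇑g ⁻¹' T \ S) ≃ₜ ↥(T \ ⇑g '' S) :=
  g.subtype fun x => by
    simp only [Set.mem_sdiff, Set.mem_preimage, g.injective.mem_set_image]

theorem pair_sim_of_cofinal_general (g : X ≃ₜ Y) {A B : Set X} {A' : Set Y}
    (hA : IsClopen A) (hA' : IsClopen A') (hBA : B ⊆ A) (hgB : ⇑g '' B ⊆ A') :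
    PairSim ↥(A' \ ⇑g '' A) ↥(A \ ⇑g ⁻¹' A') ↥(A' \ ⇑g '' B) ↥(A \ B) := by
  obtain ⟨pulledBack⟩ := pairSim_sdiff hA (hA'.preimage g.continuous)
    (Set.subset_inter hBA (Set.image_subset_iff.1 hgB))
  exact ⟨((preimageSdiffHomeomorph g A A').symm.sumCongr (.refl _)).trans
    (pulledBack.trans ((preimageSdiffHomeomorph g B A').sumCongr (.refl _)))⟩

end Cutting

theorem isClopen_Ioc {β : Type*} [LinearOrder β] [SuccOrder β] [NoMaxOrder β]
    [TopologicalSpace β] [OrderTopology β] (a b : β) : IsClopen (Set.Ioc a b) :=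
  ⟨Set.Icc_succ_left_eq_Ioc a b ▸ isClosed_Icc, Set.Ioo_succ_right_eq_Ioc a b ▸ isOpen_Ioo⟩

theorem isClopen_Ablock (α : Ordinal) (n : ℕ+) : IsClopen (Ablock α n) := by
  unfold Ablock
  rw [Set.Icc_add_one_left_eq_Ioc]
  exact (isClopen_Ioc _ _).preimage continuous_subtype_val

/-- If `g ∈ G` and `B` is a clopen cofinal subset of `A_i` (i.e. `A_i \ B` is
bounded) with `g(B) ⊆ A_{π(g)(i)}`, then
`(P_i(g), Q_i(g)) ∼ (A_{π(g)(i)} \ g(B), A_i \ B)`. -/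
theorem pair_sim_of_cofinal (α : Ordinal) (hα : α.card ≤ Cardinal.aleph0)
    (π : (Xsp α ≃ₜ Xsp α) → Equiv.Perm ℕ+) (hπ : IsBlockPerm α π)
    (g : Xsp α ≃ₜ Xsp α) (i : ℕ+) (B : Set (Xsp α))
    (hBsub : B ⊆ Ablock α i) (hBclopen : IsClopen B)
    (hBcofinal : BoundedIn α i (Ablock α i \ B))
    (hgB : ⇑g '' B ⊆ Ablock α (π g i)) :
    PairSim ↥(Pset α π g i) ↥(Qset α π g i)
      ↥(Ablock α (π g i) \ ⇑g '' B) ↥(Ablock α i \ B) :=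
  pair_sim_of_cofinal_general g (isClopen_Ablock α i) (isClopen_Ablock α (π g i)) hBsub hgB
end
end
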